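/- Let p be an odd prime and h a positive integer, and for u, v ∈ {0, 1} let T^{(u,v)} be the set of pairs (i, j) of natural numbers with 0 ≤ i ≤ j ≤ p^h − 1, C(j, i) ≢ 0 (mod p), i ≡ u (mod 2) and j ≡ v (mod 2). Then #T^{(1,0)} = #T^{(0,1)} = #T^{(1,1)} = (p+1)^h (p^h − 1)/2^{h+2}. -/

import Mathlib

/-!
By Lucas' theorem, `p ∤ C(j, i)` can be read off the base-`p` digits of `i` and `j`. If `x ^ p = x`
and `y ^ p = y`, then `x ^ i * y ^ j` also factors over the digits, so the sum of `x ^ i * y ^ j`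
over the pairs below `p ^ h` is the `h`-th power of the sum over `0 ≤ i ≤ j < p`. For `p` odd this
applies to `x, y = ±1`. The one-digit sum is `p (p + 1) / 2` at `(1, 1)` and `(p + 1) / 2` at the
three other sign patterns, and the parity classes are recovered by Fourier inversion on `(ℤ/2)²`.
-/

open Finset

/-- The support of the first `n` rows of Pascal's triangle modulo `p`: the pairs `(i, j)` with
`i ≤ j < n` and `p ∤ C(j, i)`. It is cut out of a square so that the sets `T^(u,v)` are
literally its filters. -/
def pascalSupport (p n : ℕ) : Finset (ℕ × ℕ) :=
  (range n ×ˢ range n).filter fun ij => ij.1 ≤ ij.2 ∧ ¬ p ∣ ij.2.choose ij.1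

/-- The generating function `∑ x ^ i * y ^ j` of `pascalSupport p n`. At `x, y = ±1` its values
are the Fourier coefficients from which the parity classes are counted. -/
def pascalSum {R : Type*} [CommSemiring R] (p n : ℕ) (x y : R) : R :=
  ∑ ij ∈ pascalSupport p n, x ^ ij.1 * y ^ ij.2

theorem mem_pascalSupport {p n : ℕ} {ij : ℕ × ℕ} :
    ij ∈ pascalSupport p n ↔ ij.2 < n ∧ ¬ p ∣ ij.2.choose ij.1 := by
  have le_of_not_dvd (hdvd : ¬ p ∣ ij.2.choose ij.1) : ij.1 ≤ ij.2 := by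
    contrapose! hdvd
    simp [Nat.choose_eq_zero_of_lt hdvd]
  simp only [pascalSupport, mem_filter, mem_product, mem_range]
  grind

section Lucas

variable {p : ℕ}

theorem not_dvd_choose_iff_div_mod (hp : p.Prime) (n k : ℕ) :
    ¬ p ∣ n.choose k ↔ ¬ p ∣ (n / p).choose (k / p) ∧ ¬ p ∣ (n % p).choose (k % p) := by
  have : Fact p.Prime := ⟨hp⟩
  rw [Choose.choose_modEq_choose_mod_mul_choose_div_nat.dvd_iff dvd_rfl, hp.dvd_mul, not_or,
    and_comm]

theorem not_dvd_choose_of_lt (hp : p.Prime) {n k : ℕ} (hkn : k ≤ n) (hn : n < p) :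
    ¬ p ∣ n.choose k := fun hdvd =>
  hn.not_ge <| hp.dvd_factorial.mp <|
    Nat.choose_mul_factorial_mul_factorial hkn ▸ (hdvd.mul_right _).mul_right _

theorem mem_pascalSupport_self (hp : p.Prime) {ij : ℕ × ℕ} :
    ij ∈ pascalSupport p p ↔ ij.1 ≤ ij.2 ∧ ij.2 < p := by
  simp only [pascalSupport, mem_filter, mem_product, mem_range]
  constructor
  · rintro ⟨⟨-, hlt⟩, hle, -⟩
    exact ⟨hle, hlt⟩
  · rintro ⟨hle, hlt⟩
    exact ⟨⟨hle.trans_lt hlt, hlt⟩, hle, not_dvd_choose_of_lt hp hle hlt⟩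

theorem mem_pascalSupport_mul_iff_div_mod (hp : p.Prime) (m : ℕ) {ij : ℕ × ℕ} :
    ij ∈ pascalSupport p (m * p) ↔
      (ij.1 / p, ij.2 / p) ∈ pascalSupport p m ∧ (ij.1 % p, ij.2 % p) ∈ pascalSupport p p := by
  simp only [mem_pascalSupport, not_dvd_choose_iff_div_mod hp ij.2, Nat.div_lt_iff_lt_mul hp.pos,
    Nat.mod_lt _ hp.pos, true_and, and_assoc]

end Lucas

section PascalSum

variable {R : Type*} [CommSemiring R] {p : ℕ} {x y : R}

theorem pascalSum_mul (hp : p.Prime) (m : ℕ) (hx : x ^ p = x) (hy : y ^ p = y) :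
    pascalSum p (m * p) x y = pascalSum p m x y * pascalSum p p x y := by
  have pow_digits {z : R} (hz : z ^ p = z) (a b : ℕ) : z ^ (p * a + b) = z ^ a * z ^ b := by
    rw [pow_add, pow_mul, hz]
  have digits {q : (ℕ × ℕ) × (ℕ × ℕ)} (hq : q ∈ pascalSupport p m ×ˢ pascalSupport p p) :
      (p * q.1.1 + q.2.1) / p = q.1.1 ∧ (p * q.1.1 + q.2.1) % p = q.2.1 ∧
        (p * q.1.2 + q.2.2) / p = q.1.2 ∧ (p * q.1.2 + q.2.2) % p = q.2.2 := by
    obtain ⟨hle, hlt⟩ := (mem_pascalSupport_self hp).mp (mem_product.mp hq).2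
    simp [Nat.mul_add_div hp.pos, Nat.mod_eq_of_lt, Nat.div_eq_of_lt, hlt,
      hle.trans_lt hlt]
  unfold pascalSum
  rw [sum_mul_sum, ← sum_product']
  symm
  refine sum_bij' (fun q _ => (p * q.1.1 + q.2.1, p * q.1.2 + q.2.2))
    (fun ij _ => ((ij.1 / p, ij.2 / p), (ij.1 % p, ij.2 % p))) ?_ ?_ ?_ ?_ ?_
  · intro q hq
    obtain ⟨h₁, h₂, h₃, h₄⟩ := digits hq
    rw [mem_pascalSupport_mul_iff_div_mod hp, h₁, h₂, h₃, h₄]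
    exact mem_product.mp hq
  · exact fun ij hij => mem_product.mpr ((mem_pascalSupport_mul_iff_div_mod hp m).mp hij)
  · intro q hq
    obtain ⟨h₁, h₂, h₃, h₄⟩ := digits hq
    simp only [h₁, h₂, h₃, h₄]
  · exact fun ij _ => Prod.ext (Nat.div_add_mod _ _) (Nat.div_add_mod _ _)
  · intro q _
    rw [pow_digits hx, pow_digits hy, mul_mul_mul_comm]

theorem pascalSum_pow (hp : p.Prime) (h : ℕ) (hx : x ^ p = x) (hy : y ^ p = y) :
    pascalSum p (p ^ h) x y = pascalSum p p x y ^ h := by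
  induction h with
  | zero => simp [pascalSum, pascalSupport, filter_singleton, hp.ne_one]
  | succ h ih => rw [pow_succ, pascalSum_mul hp _ hx hy, ih, pow_succ]

theorem pascalSum_self (hp : p.Prime) (x y : R) :
    pascalSum p p x y = ∑ j ∈ range p, (∑ i ∈ range (j + 1), x ^ i) * y ^ j := by
  simp only [sum_mul]
  refine sum_finset_product_right' _ _ _ (fun ij => ?_) (f := fun i j => x ^ i * y ^ j)
  rw [mem_pascalSupport_self hp, mem_range, mem_range, Nat.lt_succ_iff, and_comm]

end PascalSum

section OneDigit

variable {p : ℕ}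

theorem two_mul_card_filter_even_range {n : ℕ} (hn : Odd n) :
    2 * #{j ∈ range n | Even j} = n + 1 := by
  obtain ⟨k, rfl⟩ := hn
  induction k with
  | zero => simp [filter_singleton]
  | succ k ih =>
    rw [show 2 * (k + 1) + 1 = 2 * k + 1 + 1 + 1 by ring, range_add_one, range_add_one,
      filter_insert, filter_insert, if_pos (by simp [parity_simps]),
      if_neg (by simp [parity_simps]), card_insert_of_notMem (by simp), mul_add, ih]

theorem four_mul_sum_range_succ_mul_neg_one_pow (n : ℕ) :
    4 * ∑ j ∈ range n, ((j : ℤ) + 1) * (-1) ^ j = 1 - (-1) ^ n * (2 * n + 1) := by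
  induction n with
  | zero => simp
  | succ n ih =>
    rw [sum_range_succ, mul_add, ih]
    push_cast
    ring

theorem two_mul_pascalSum_one_one {R : Type*} [CommSemiring R] (hp : p.Prime) :
    2 * pascalSum p p (1 : R) 1 = p * (p + 1) := by
  have gauss : 2 * ∑ j ∈ range p, (j + 1) = p * (p + 1) := by
    simpa [sum_range_succ', mul_comm] using sum_range_id_mul_two (p + 1)
  simp only [pascalSum_self hp, one_pow, sum_const, card_range, nsmul_eq_mul, mul_one]
  exact_mod_cast congrArg (Nat.cast (R := R)) gauss

theorem two_mul_pascalSum_one_neg_one (hp : p.Prime) (hodd : Odd p) :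
    2 * pascalSum p p (1 : ℤ) (-1) = p + 1 := by
  have alternating := four_mul_sum_range_succ_mul_neg_one_pow p
  rw [hodd.neg_one_pow] at alternating
  simp only [pascalSum_self hp, one_pow, sum_const, card_range, nsmul_eq_mul, mul_one]
  push_cast
  linarith

theorem two_mul_pascalSum_neg_one_left {R : Type*} [CommRing R] (hp : p.Prime) (hodd : Odd p)
    {y : R} (hy : y * y = 1) : 2 * pascalSum p p (-1) y = p + 1 := by
  have even_part (j : ℕ) :
      (∑ i ∈ range (j + 1), (-1) ^ i) * y ^ j = if Even j then 1 else 0 := by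
    rw [neg_one_geom_sum]
    rcases j.even_or_odd with hj | hj
    · obtain ⟨k, rfl⟩ := hj
      simp [parity_simps, pow_add, ← mul_pow, hy]
    · simp [hj, parity_simps]
  simp only [pascalSum_self hp, even_part, sum_boole]
  exact_mod_cast congrArg (Nat.cast (R := R)) (two_mul_card_filter_even_range hodd)

theorem two_mul_pascalSum_units (hp : p.Prime) (hodd : Odd p) (x y : ℤˣ) :
    2 * pascalSum p p (x : ℤ) y = (p + 1) * if x = 1 ∧ y = 1 then (p : ℤ) else 1 := by
  rcases Int.units_eq_one_or x with rfl | rfl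
  · rcases Int.units_eq_one_or y with rfl | rfl
    · simpa [mul_comm] using two_mul_pascalSum_one_one (R := ℤ) hp
    · simpa using two_mul_pascalSum_one_neg_one hp hodd
  · simpa using two_mul_pascalSum_neg_one_left hp hodd (Int.units_coe_mul_self y)

end OneDigit

theorem two_pow_mul_pascalSum_pow_units {p : ℕ} (hp : p.Prime) (hodd : Odd p) (h : ℕ)
    (x y : ℤˣ) :
    2 ^ h * pascalSum p (p ^ h) (x : ℤ) y =
      (p + 1) ^ h * if x = 1 ∧ y = 1 then (p : ℤ) ^ h else 1 := by
  have pow_self (z : ℤˣ) : (z : ℤ) ^ p = z := by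
    rcases Int.units_eq_one_or z with rfl | rfl <;> simp [hodd.neg_one_pow]
  rw [pascalSum_pow hp h (pow_self x) (pow_self y), ← mul_pow, two_mul_pascalSum_units hp hodd,
    mul_pow, ite_pow, one_pow]

theorem four_mul_card_filter_units_int {ι : Type*} (s : Finset ι) (f g : ι → ℤˣ) (ε δ : ℤˣ) :
    4 * (#{a ∈ s | f a = ε ∧ g a = δ} : ℤ) =
      #s + ε * ∑ a ∈ s, (f a : ℤ) + δ * ∑ a ∈ s, (g a : ℤ)
        + ε * δ * ∑ a ∈ s, (f a : ℤ) * g a := by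
  have four_mul_indicator (u v : ℤˣ) : (if u = ε ∧ v = δ then 4 else 0 : ℤ) =
      1 + ε * u + δ * v + ε * δ * (u * v) := by
    decide +revert
  rw [card_filter, card_eq_sum_ones]
  push_cast
  simp only [mul_sum, ← sum_add_distrib, mul_ite, mul_one, mul_zero, four_mul_indicator]

theorem four_mul_card_pascalSupport_filter (p n : ℕ) (ε δ : ℤˣ) :
    4 * (#{ij ∈ pascalSupport p n | (-1) ^ ij.1 = ε ∧ (-1) ^ ij.2 = δ} : ℤ) =
      pascalSum p n 1 1 + ε * pascalSum p n (-1) 1 + δ * pascalSum p n 1 (-1)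
        + ε * δ * pascalSum p n (-1) (-1) := by
  simpa [pascalSum] using four_mul_card_filter_units_int (pascalSupport p n)
    (fun ij => (-1) ^ ij.1) (fun ij => (-1) ^ ij.2) ε δ

theorem two_pow_mul_card_pascalSupport_filter {p : ℕ} (hp : p.Prime) (hodd : Odd p) (h : ℕ)
    (ε δ : ℤˣ) :
    2 ^ (h + 2) * (#{ij ∈ pascalSupport p (p ^ h) | (-1) ^ ij.1 = ε ∧ (-1) ^ ij.2 = δ} : ℤ) =
      (p + 1) ^ h * (p ^ h + (ε + δ + ε * δ)) := by
  have coeff := two_pow_mul_pascalSum_pow_units hp hodd h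
  have coeff₀₀ : 2 ^ h * pascalSum p (p ^ h) (1 : ℤ) 1 = (p + 1) ^ h * p ^ h := by
    simpa using coeff 1 1
  have coeff₁₀ : 2 ^ h * pascalSum p (p ^ h) (-1 : ℤ) 1 = (p + 1) ^ h := by
    simpa using coeff (-1) 1
  have coeff₀₁ : 2 ^ h * pascalSum p (p ^ h) (1 : ℤ) (-1) = (p + 1) ^ h := by
    simpa using coeff 1 (-1)
  have coeff₁₁ : 2 ^ h * pascalSum p (p ^ h) (-1 : ℤ) (-1) = (p + 1) ^ h := by
    simpa using coeff (-1) (-1)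
  rw [pow_add, mul_assoc, show (2 : ℤ) ^ 2 = 4 by norm_num, four_mul_card_pascalSupport_filter]
  linear_combination coeff₀₀ + ε * coeff₁₀ + δ * coeff₀₁ + ε * δ * coeff₁₁

/-- For `p` odd, the three sets `T^(1,0)`, `T^(0,1)`, `T^(1,1)` of pairs `(i, j)` with
`0 ≤ i ≤ j ≤ p^h − 1`, `p ∤ C(j, i)`, and `i ≡ u`, `j ≡ v (mod 2)` all have cardinality
`(p+1)^h (p^h − 1)/2^(h+2)`. -/
theorem stmt_10 (p h : ℕ) (hp : p.Prime) (hodd : Odd p) (hh : 0 < h) :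
    ((Finset.range (p ^ h) ×ˢ Finset.range (p ^ h)).filter
      (fun ij : ℕ × ℕ => ij.1 ≤ ij.2 ∧ ¬ p ∣ Nat.choose ij.2 ij.1 ∧
        Odd ij.1 ∧ Even ij.2)).card = (p + 1) ^ h * (p ^ h - 1) / 2 ^ (h + 2) ∧
    ((Finset.range (p ^ h) ×ˢ Finset.range (p ^ h)).filter
      (fun ij : ℕ × ℕ => ij.1 ≤ ij.2 ∧ ¬ p ∣ Nat.choose ij.2 ij.1 ∧
        Even ij.1 ∧ Odd ij.2)).card = (p + 1) ^ h * (p ^ h - 1) / 2 ^ (h + 2) ∧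
    ((Finset.range (p ^ h) ×ˢ Finset.range (p ^ h)).filter
      (fun ij : ℕ × ℕ => ij.1 ≤ ij.2 ∧ ¬ p ∣ Nat.choose ij.2 ij.1 ∧
        Odd ij.1 ∧ Odd ij.2)).card = (p + 1) ^ h * (p ^ h - 1) / 2 ^ (h + 2) := by
  have card_parity_class (ε δ : ℤˣ) (hεδ : (ε + δ + ε * δ : ℤ) = -1) :
      #{ij ∈ pascalSupport p (p ^ h) | (-1) ^ ij.1 = ε ∧ (-1) ^ ij.2 = δ} =
        (p + 1) ^ h * (p ^ h - 1) / 2 ^ (h + 2) := by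
    refine (Nat.div_eq_of_eq_mul_right (by positivity) ?_).symm
    zify [Nat.one_le_pow h p hp.pos]
    rw [two_pow_mul_card_pascalSupport_filter hp hodd, hεδ, sub_eq_add_neg]
  have odd_iff (n : ℕ) : Odd n ↔ (-1 : ℤˣ) ^ n = -1 :=
    (neg_one_pow_eq_neg_one_iff_odd (by decide)).symm
  have even_iff (n : ℕ) : Even n ↔ (-1 : ℤˣ) ^ n = 1 :=
    (neg_one_pow_eq_one_iff_even (by decide)).symm
  simp only [pascalSupport, filter_filter, and_assoc] at card_parity_class
  simp only [odd_iff, even_iff]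
  exact ⟨card_parity_class (-1) 1 (by simp), card_parity_class 1 (-1) (by simp),
    card_parity_class (-1) (-1) (by simp)⟩
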